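/- Let G be a finite simple graph of order n ≥ 1 and let l = min { j : d(G,j) = C(n,j) }. If for every two distinct vertices u and v of degree δ(G) one has N[u] ≠ N[v], then G has exactly C(n, l−1) − d(G, l−1) vertices of degree δ(G) = n − l. -/

import Mathlib

/-- `S` is a dominating set of `G`: every vertex not in `S` is adjacent to some vertex of `S`. -/
def IsDomSet {V : Type*} (G : SimpleGraph V) (S : Finset V) : Prop :=
  ∀ v : V, v ∉ S → ∃ u ∈ S, G.Adj u v

/-- `d(G,i)`: the number of dominating sets of `G` of cardinality `i`. -/
noncomputable def domCount {V : Type*} (G : SimpleGraph V) (i : ℕ) : ℕ :=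
  {S : Finset V | IsDomSet G S ∧ S.card = i}.ncard

/-- `d_v(G,i)`: the number of dominating sets of `G` of cardinality `i` containing `v`. -/
noncomputable def domCountVert {V : Type*} (G : SimpleGraph V) (v : V) (i : ℕ) : ℕ :=
  {S : Finset V | IsDomSet G S ∧ S.card = i ∧ v ∈ S}.ncard

open Classical in
theorem domCount_add {V : Type*} [Fintype V] (G : SimpleGraph V) (j : ℕ) :
    domCount G j + ((Finset.powersetCard j (Finset.univ : Finset V)).filter
      fun S => ¬ IsDomSet G S).card = (Fintype.card V).choose j := by
  have h : {S : Finset V | IsDomSet G S ∧ S.card = j} =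
      (((Finset.powersetCard j (Finset.univ : Finset V)).filter
        fun S => IsDomSet G S : Finset (Finset V)) : Set (Finset V)) := by
    ext S
    simp [Finset.mem_powersetCard, and_comm]
  unfold domCount
  rw [h, Set.ncard_coe_finset, Finset.card_filter_add_card_filter_not,
    Finset.card_powersetCard, Finset.card_univ]

theorem not_isDomSet_iff {V : Type*} [Fintype V] [DecidableEq V]
    (G : SimpleGraph V) [DecidableRel G.Adj] (S : Finset V) :
    ¬ IsDomSet G S ↔ ∃ v, S ⊆ (insert v (G.neighborFinset v))ᶜ := by
  unfold IsDomSet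
  push Not
  refine exists_congr fun v => ⟨?_, ?_⟩
  · rintro ⟨h1, h2⟩ x hx
    simp only [Finset.mem_compl, Finset.mem_insert, SimpleGraph.mem_neighborFinset, not_or]
    exact ⟨fun e => h1 (e ▸ hx), fun e => h2 x hx e.symm⟩
  · intro h
    refine ⟨fun hv => ?_, fun u hu e => ?_⟩
    · simpa using h hv
    · have := h hu
      simp [e.symm] at this

theorem card_compl_closed {V : Type*} [Fintype V] [DecidableEq V]
    (G : SimpleGraph V) [DecidableRel G.Adj] (v : V) :
    ((insert v (G.neighborFinset v))ᶜ).card + G.degree v + 1 = Fintype.card V := by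
  have h1 := Finset.card_add_card_compl (insert v (G.neighborFinset v))
  rw [Finset.card_insert_of_notMem (by simp), SimpleGraph.card_neighborFinset_eq_degree] at h1
  omega

theorem card_minDegree_vertices_eq {V : Type*} [Fintype V] [Nonempty V] [DecidableEq V]
    (G : SimpleGraph V) [DecidableRel G.Adj] (l : ℕ)
    (hl : l = sInf {j : ℕ | domCount G j = (Fintype.card V).choose j})
    (hnbr : ∀ u v : V, u ≠ v → G.degree u = G.minDegree → G.degree v = G.minDegree →
      insert u (G.neighborFinset u) ≠ insert v (G.neighborFinset v)) :
    G.minDegree = Fintype.card V - l ∧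
    (Finset.univ.filter fun v : V => G.degree v = G.minDegree).card =
      (Fintype.card V).choose (l - 1) - domCount G (l - 1) := by
  classical
  obtain ⟨v₀, hv₀⟩ := G.exists_minimal_degree_vertex
  have hc₀ := card_compl_closed G v₀
  have hiff : ∀ j, domCount G j = (Fintype.card V).choose j ↔
      Fintype.card V - G.minDegree ≤ j := by
    intro j
    have hadd := domCount_add G j
    constructor
    · intro h
      by_contra hlt
      have hj : j ≤ ((insert v₀ (G.neighborFinset v₀))ᶜ).card := by omega
      obtain ⟨S, hS, hSc⟩ := Finset.exists_subset_card_eq hj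
      have : S ∈ (Finset.powersetCard j (Finset.univ : Finset V)).filter
          fun S => ¬ IsDomSet G S := by
        rw [Finset.mem_filter, Finset.mem_powersetCard]
        exact ⟨⟨Finset.subset_univ _, hSc⟩, (not_isDomSet_iff G S).2 ⟨v₀, hS⟩⟩
      have := Finset.card_pos.2 ⟨S, this⟩
      omega
    · intro h
      have : (Finset.powersetCard j (Finset.univ : Finset V)).filter
          (fun S => ¬ IsDomSet G S) = ∅ := by
        rw [Finset.eq_empty_iff_forall_notMem]
        intro S hS
        rw [Finset.mem_filter, Finset.mem_powersetCard, not_isDomSet_iff] at hS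
        obtain ⟨⟨-, hSc⟩, v, hv⟩ := hS
        have h1 := Finset.card_le_card hv
        have h2 := card_compl_closed G v
        have h3 := G.minDegree_le_degree v
        omega
      rw [this, Finset.card_empty] at hadd
      exact hadd
  have hl' : l = Fintype.card V - G.minDegree := by
    have : {j : ℕ | domCount G j = (Fintype.card V).choose j} =
        Set.Ici (Fintype.card V - G.minDegree) := by
      ext j; exact hiff j
    rw [hl, this, csInf_Ici]
  refine ⟨by omega, ?_⟩
  have hadd := domCount_add G (l - 1)
  rw [← hadd, Nat.add_sub_cancel_left]
  refine Finset.card_bij (fun v _ => (insert v (G.neighborFinset v))ᶜ) ?_ ?_ ?_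
  · intro v hv
    rw [Finset.mem_filter] at hv
    have := card_compl_closed G v
    rw [Finset.mem_filter, Finset.mem_powersetCard, not_isDomSet_iff]
    exact ⟨⟨Finset.subset_univ _, by omega⟩, v, Finset.Subset.refl _⟩
  · intro u hu v hv h
    rw [Finset.mem_filter] at hu hv
    by_contra hne
    exact hnbr u v hne hu.2 hv.2 (compl_injective h)
  · intro S hS
    rw [Finset.mem_filter, Finset.mem_powersetCard, not_isDomSet_iff] at hS
    obtain ⟨⟨-, hSc⟩, v, hv⟩ := hS
    have h1 := Finset.card_le_card hv
    have h2 := card_compl_closed G v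
    have h3 := G.minDegree_le_degree v
    refine ⟨v, ?_, (Finset.eq_of_subset_of_card_le hv (by omega)).symm⟩
    rw [Finset.mem_filter]
    exact ⟨Finset.mem_univ _, by omega⟩
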